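/- arXiv:1705.03235 — 6 statements merged into one kernel-verified Lean document; each statement's English description precedes it below -/
import Mathlib

section
/- Let V be a 3-dimensional vector space over E carrying a nondegenerate hermitian form J with respect to the involution α, and assume there exists a nonzero vector v ∈ V with J(v,v) = 0. Then there exists a basis (e₁, e₂, e₃) of V and an element b ∈ E fixed by α (i.e. b lies in the fixed field F) such that J(e₁,e₃) = J(e₃,e₁) = 1, J(e₂,e₂) = b, and J(eᵢ,eⱼ) = 0 for every other pair (i,j); that is, the matrix of J in this basis is [[0,0,1],[0,b,0],[1,0,0]]. -/
/-!
An isotropic `v` outside the radical pairs to `1` with some `w₀`. As `J w₀ w₀` is fixed by the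
involution and `1 = s + α s` for some `s`, it is the trace of `s * J w₀ w₀`; subtracting that
multiple of `v` from `w₀` makes it isotropic too. The orthogonal complement of the resulting
hyperbolic plane is a line, and any vector spanning it is the middle vector of the basis.
-/

theorem exists_add_map_eq_one {K : Type*} [Field K] {σ : K →+* K}
    (hσ : ∀ x, σ (σ x) = x) (hne : ∃ x, σ x ≠ x) : ∃ s, s + σ s = 1 := by
  obtain ⟨t, ht⟩ : ∃ t, t + σ t ≠ 0 := by
    by_contra! h
    obtain ⟨x, hx⟩ := hne
    have two_eq_zero : (1 : K) + 1 = 0 := by simpa only [map_one] using h 1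
    exact hx (by linear_combination h x - x * two_eq_zero)
  refine ⟨t / (t + σ t), ?_⟩
  rw [map_div₀, map_add, hσ, add_comm (σ t) t, ← add_div, div_self ht]

/-- `v` and `w` are isotropic vectors with `B v w = 1`: a standard basis of a hyperbolic plane.
The value of `B w v` is not recorded: for symmetric `B` it is again `1`. -/
structure IsHyperbolicPair {R V : Type*} [CommSemiring R] [AddCommMonoid V] [Module R V]
    {σ : R →+* R} (B : V →ₛₗ[σ] V →ₗ[R] R) (v w : V) : Prop where
  left_self : B v v = 0
  right_self : B w w = 0
  left_right : B v w = 1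

namespace IsHyperbolicPair

theorem right_left {R V : Type*} [CommSemiring R] [AddCommMonoid V] [Module R V]
    {σ : R →+* R} {B : V →ₛₗ[σ] V →ₗ[R] R} {v w : V}
    (h : IsHyperbolicPair B v w) (hB : B.IsSymm) : B w v = 1 := by
  rw [← hB.eq, h.left_right, map_one]

section CommRing

variable {R V : Type*} [CommRing R] [AddCommGroup V] [Module R V] {σ : R →+* R}
  {B : V →ₛₗ[σ] V →ₗ[R] R} {v w u : V}

theorem sub_smul (hB : B.IsSymm) {s : R} (hs : s + σ s = 1) (hv : B v v = 0)
    (hvw : B v w = 1) : IsHyperbolicPair B v (w - (s * B w w) • v) where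
  left_self := hv
  right_self := by
    have hwv : B w v = 1 := by rw [← hB.eq, hvw, map_one]
    simp only [map_sub, map_smulₛₗ, LinearMap.sub_apply, LinearMap.smul_apply, smul_eq_mul,
      map_mul, hB.eq, RingHom.id_apply, hv, hvw, hwv]
    linear_combination -B w w * hs
  left_right := by rw [map_sub, map_smul, hv, hvw, smul_zero, sub_zero]

theorem linearIndependent [IsDomain R] [Module.IsTorsionFree R V]
    (h : IsHyperbolicPair B v w) (hB : B.IsSymm) (hu : u ≠ 0) (hvu : B v u = 0)
    (hwu : B w u = 0) : LinearIndependent R ![v, u, w] := by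
  rw [Fintype.linearIndependent_iff]
  intro c hc
  replace hc : c 0 • v + c 1 • u + c 2 • w = 0 := by simpa [Fin.sum_univ_three] using hc
  have hc₀ : c 0 = 0 := by
    simpa [h.right_left hB, h.right_self, hwu] using congrArg (B w) hc
  have hc₂ : c 2 = 0 := by
    simpa [h.left_self, h.left_right, hvu] using congrArg (B v) hc
  have hc₁ : c 1 = 0 := by simpa [hc₀, hc₂, hu] using hc
  exact Fin.forall_fin_succ.2 ⟨hc₀, Fin.forall_fin_two.2 ⟨hc₁, hc₂⟩⟩

end CommRing

section Field

variable {K V : Type*} [Field K] [AddCommGroup V] [Module K V] {σ : K →+* K}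
  {B : V →ₛₗ[σ] V →ₗ[K] K} {v w : V}

theorem exists_of_apply_ne_zero (hB : B.IsSymm) {s : K} (hs : s + σ s = 1) (hv : B v v = 0)
    (hv' : B v ≠ 0) : ∃ w, IsHyperbolicPair B v w := by
  obtain ⟨w, hvw⟩ := LinearMap.surjective hv' 1
  exact ⟨_, sub_smul hB hs hv hvw⟩

theorem exists_basis_toMatrix₂_eq (h : IsHyperbolicPair B v w) (hB : B.IsSymm)
    (hdim : Module.finrank K V = 3) :
    ∃ (e : Module.Basis (Fin 3) K V) (b : K), σ b = b ∧
      LinearMap.toMatrix₂ e e B = !![0, 0, 1; 0, b, 0; 1, 0, 0] := by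
  have : FiniteDimensional K V := Module.finite_of_finrank_eq_succ hdim
  obtain ⟨u, hu, hu₀⟩ : ∃ u ∈ LinearMap.ker ((B v).prod (B w)), u ≠ 0 :=
    Submodule.exists_mem_ne_zero_of_ne_bot
      (LinearMap.ker_ne_bot_of_finrank_lt (by simp [hdim]))
  obtain ⟨hvu, hwu⟩ : B v u = 0 ∧ B w u = 0 := by simpa using hu
  let e := basisOfLinearIndependentOfCardEqFinrank
    (h.linearIndependent hB hu₀ hvu hwu) (by simp [hdim])
  have he : ⇑e = ![v, u, w] := coe_basisOfLinearIndependentOfCardEqFinrank _ _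
  refine ⟨e, B u u, hB.eq u u, ?_⟩
  ext i j
  rw [LinearMap.toMatrix₂_apply, he]
  fin_cases i <;> fin_cases j <;>
    simp [h.left_self, h.left_right, h.right_self, h.right_left hB, hvu, hwu,
      hB.eq_iff.1 hvu, hB.eq_iff.1 hwu]

end Field

end IsHyperbolicPair

theorem hermitian_form_isotropic_basis_general
    {E : Type*} [Field E] {α : E →+* E} {s : E} (hs : s + α s = 1)
    {V : Type*} [AddCommGroup V] [Module E V] (hdim : Module.finrank E V = 3)
    {J : V → V → E}
    (hadd1 : ∀ x x' y, J (x + x') y = J x y + J x' y)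
    (hadd2 : ∀ x y y', J x (y + y') = J x y + J x y')
    (hsmul1 : ∀ (l : E) (x y : V), J (l • x) y = l * J x y)
    (hsmul2 : ∀ (l : E) (x y : V), J x (l • y) = α l * J x y)
    (hherm : ∀ x y, J y x = α (J x y))
    {v : V} (hv : ∃ w, J v w ≠ 0) (hiso : J v v = 0) :
    ∃ (e : Module.Basis (Fin 3) E V) (b : E), α b = b ∧
      J (e 0) (e 2) = 1 ∧ J (e 2) (e 0) = 1 ∧ J (e 1) (e 1) = b ∧
      (∀ i j : Fin 3,
        ¬((i = 0 ∧ j = 2) ∨ (i = 2 ∧ j = 0) ∨ (i = 1 ∧ j = 1)) →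
        J (e i) (e j) = 0) := by
  -- The arguments are swapped: Mathlib's sesquilinear forms are linear in the second one.
  let B : V →ₛₗ[α] V →ₗ[E] E := LinearMap.mk₂'ₛₗ α (RingHom.id E) (fun x y ↦ J y x)
    (fun x x' y ↦ hadd2 y x x') (fun l x y ↦ hsmul2 l y x)
    (fun x y y' ↦ hadd1 y y' x) (fun l x y ↦ hsmul1 l y x)
  have hB : B.IsSymm := ⟨fun x y ↦ (hherm y x).symm⟩
  obtain ⟨w, hvw⟩ := hv
  have hBv : B v ≠ 0 := fun h ↦ hvw (hB.eq_iff.1 (LinearMap.congr_fun h w))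
  obtain ⟨_, hpair⟩ := IsHyperbolicPair.exists_of_apply_ne_zero hB hs hiso hBv
  obtain ⟨e, b, hb, hmat⟩ := hpair.exists_basis_toMatrix₂_eq hB hdim
  have hJ (i j) : J (e i) (e j) = !![0, 0, 1; 0, b, 0; 1, 0, 0] j i := by
    rw [← hmat, LinearMap.toMatrix₂_apply]
    rfl
  refine ⟨e, b, hb, hJ 0 2, hJ 2 0, hJ 1 1, fun i j hij ↦ ?_⟩
  rw [hJ]
  fin_cases i <;> fin_cases j <;> simp at hij ⊢

/-- A nondegenerate hermitian form on a 3-dimensional space admitting a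
nonzero isotropic vector has, in a suitable basis, the matrix `[[0,0,1],[0,b,0],[1,0,0]]`
with `b` fixed by the involution `α`. -/
theorem hermitian_form_isotropic_basis
    (E : Type*) [Field E] (α : E ≃+* E)
    (hα2 : ∀ x, α (α x) = x) (hα : ∃ x, α x ≠ x)
    (V : Type*) [AddCommGroup V] [Module E V]
    [FiniteDimensional E V] (hdim : Module.finrank E V = 3)
    (J : V → V → E)
    (hadd1 : ∀ x x' y, J (x + x') y = J x y + J x' y)
    (hadd2 : ∀ x y y', J x (y + y') = J x y + J x y')
    (hsmul1 : ∀ (l : E) (x y : V), J (l • x) y = l * J x y)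
    (hsmul2 : ∀ (l : E) (x y : V), J x (l • y) = α l * J x y)
    (hherm : ∀ x y, J y x = α (J x y))
    (hnd : ∀ x, (∀ y, J x y = 0) → x = 0)
    (v : V) (hv : v ≠ 0) (hiso : J v v = 0) :
    ∃ (e : Module.Basis (Fin 3) E V) (b : E), α b = b ∧
      J (e 0) (e 2) = 1 ∧ J (e 2) (e 0) = 1 ∧ J (e 1) (e 1) = b ∧
      (∀ i j : Fin 3,
        ¬((i = 0 ∧ j = 2) ∨ (i = 2 ∧ j = 0) ∨ (i = 1 ∧ j = 1)) →
        J (e i) (e j) = 0) := by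
  obtain ⟨s, hs⟩ := exists_add_map_eq_one (σ := (α : E →+* E)) hα2 hα
  exact hermitian_form_isotropic_basis_general hs hdim hadd1 hadd2 hsmul1 hsmul2 hherm
    (not_forall.1 (mt (hnd v) hv)) hiso
end

section
/- Let n ≥ 0 be a natural number, let G be the free abelian group ℤⁿ, and let M be a one-dimensional complex representation of G (given by a homomorphism ρ : G → ℂ^×) such that the action is nontrivial, i.e. there exists x ∈ G with ρ(x) ≠ 1. Then for every k ≥ 0 the group cohomology H^k(G, M) vanishes. -/
/-- The one-dimensional representation of a group `G` on `ℂ` given by a character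
`ρ : G →* ℂˣ`, acting by scalar multiplication. -/
noncomputable def charRep (G : Type*) [Group G] (ρ : G →* ℂˣ) : Representation ℂ G ℂ where
  toFun g := (ρ g : ℂ) • (LinearMap.id : ℂ →ₗ[ℂ] ℂ)
  map_one' := by
    ext
    simp
  map_mul' g h := by
    ext
    simp [mul_comm]

/-!
A central element `g` of `G` acts on every representation of `G` by an endomorphism commuting with
all morphisms. On `Extⁿ(k, A)`, acting through `k` and acting through `A` are therefore the same
operation. The former action of `g - 1` is zero because `k` is trivial, while the latter is
invertible as soon as `g - 1` is invertible on `A`; hence `Hⁿ(G, A) = Extⁿ(k, A) = 0`. For a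
character `ρ`, the operator `g - 1` is multiplication by `ρ g - 1`.
-/

open CategoryTheory Limits

section Center

variable {C : Type*} [Category* C]

/-- The degreewise action of an element of the center of `C` on complexes in `C`, as an element
of the center of the category of complexes. -/
def catCenterComplex [HasZeroMorphisms C] {ι : Type*} (c : ComplexShape ι) (z : CatCenter C) :
    CatCenter (HomologicalComplex C c) where
  app K :=
    { f i := z.app (K.X i)
      comm' i j _ := (z.naturality (K.d i j)).symm }
  naturality _ _ f := by
    ext i
    exact z.naturality (f.f i)

lemma catCenterComplex_app_comp_π [HasZeroObject C] [HasZeroMorphisms C] (z : CatCenter C) {X : C}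
    (P : ProjectiveResolution X) :
    (catCenterComplex _ z).app P.complex ≫ P.π =
      P.π ≫ (ChainComplex.single₀ C).map (z.app X) := by
  apply HomologicalComplex.to_single_hom_ext
  simpa [catCenterComplex] using (z.naturality (P.π.f 0)).symm

variable [Abelian C]

instance leftDerived_preservesZeroMorphisms [HasProjectiveResolutions C] {D : Type*} [Category* D]
    [Abelian D] (F : C ⥤ D) [F.Additive] (n : ℕ) : (F.leftDerived n).PreservesZeroMorphisms where
  map_zero X Y := by
    rw [F.leftDerived_map_eq n _ (P := projectiveResolution X) (Q := projectiveResolution Y) 0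
      (by simp), Functor.map_zero, zero_comp, comp_zero]

variable {R : Type*} [Ring R] [Linear R C] [EnoughProjectives C]

theorem Ext_map_catCenter_app (z : CatCenter C) (X Y : C) (n : ℕ) :
    ((Ext R C n).map (z.app X).op).app Y = ((Ext R C n).obj (.op X)).map (z.app Y) := by
  let P := projectiveResolution X
  let F := ((linearYoneda R C).obj Y).rightOp
  let postcomp : F ⟶ F := NatTrans.rightOp ((linearYoneda R C).map (z.app Y))
  have map_eq : (F.mapHomologicalComplex _).map ((catCenterComplex _ z).app P.complex) =
      (NatTrans.mapHomologicalComplex postcomp _).app P.complex := by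
    ext i
    refine Quiver.Hom.unop_inj ?_
    ext f
    exact (z.naturality f).symm
  have derived_eq : (F.leftDerived n).map (z.app X) = (NatTrans.leftDerived postcomp n).app X := by
    rw [F.leftDerived_map_eq n _ _ (catCenterComplex_app_comp_π z P),
      P.leftDerived_app_eq postcomp n, Functor.comp_map, map_eq]
  exact congrArg Quiver.Hom.unop derived_eq

theorem isZero_Ext_of_catCenter (z : CatCenter C) {X Y : C} (hX : z.app X = 0)
    [IsIso (z.app Y)] (n : ℕ) : IsZero (((Ext R C n).obj (.op X)).obj Y) := by
  have map_eq_zero : ((Ext R C n).obj (.op X)).map (z.app Y) = 0 := by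
    rw [← Ext_map_catCenter_app, hX]
    exact congrArg Quiver.Hom.unop
      ((((linearYoneda R C).obj Y).rightOp.leftDerived n).map_zero X X)
  exact IsZero.of_epi_eq_zero _ map_eq_zero

end Center

section CentralAction

universe u

/-- The action of a central element of `G` on all `k`-linear representations of `G`, as an element
of the center of `Rep k G`. -/
def centralAction (k : Type*) {G : Type*} [Semiring k] [Monoid G] (g : Submonoid.center G) :
    CatCenter (Rep k G) where
  app A := Rep.ofHom ⟨A.ρ g, fun h ↦ by
    rw [← Module.End.mul_eq_comp, ← Module.End.mul_eq_comp, ← map_mul, ← map_mul,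
      Submonoid.mem_center_iff.1 g.2 h]⟩
  naturality A B f := by
    ext x
    exact (Rep.hom_comm_apply f g.1 x).symm

theorem isZero_groupCohomology_of_isUnit_sub_one {k G : Type u} [CommRing k] [Group G]
    (A : Rep.{u} k G) {g : G} (hg : g ∈ Subgroup.center G) (hA : IsUnit (A.ρ g - 1)) (n : ℕ) :
    IsZero (groupCohomology A n) := by
  let z : CatCenter (Rep k G) := centralAction k ⟨g, hg⟩ - 1
  have app_trivial : z.app (Rep.trivial k G k) = 0 := by
    ext
    exact sub_self _
  have isIso_app : IsIso (z.app A) := by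
    have : IsIso ((forget (Rep k G)).map (z.app A)) :=
      (isIso_iff_bijective _).2 ((Module.End.isUnit_iff _).1 hA)
    exact isIso_of_reflects_iso _ (forget (Rep k G))
  exact (isZero_Ext_of_catCenter z app_trivial n).of_iso (groupCohomologyIsoExt A n)

lemma isUnit_charRep_sub_one {G : Type*} [Group G] {ρ : G →* ℂˣ} {g : G} (hg : ρ g ≠ 1) :
    IsUnit (charRep G ρ g - 1) := by
  have eq_algebraMap : charRep G ρ g - 1 = algebraMap ℂ (Module.End ℂ ℂ) (ρ g - 1) := by
    ext
    simp [charRep]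
  rw [eq_algebraMap]
  exact (sub_ne_zero.2 (Units.val_eq_one.not.2 hg)).isUnit.map _

end CentralAction

theorem groupCohomology_zn_nontrivial_char_eq_zero_general {G : Type} [Group G] (ρ : G →* ℂˣ)
    (hnt : ∃ g ∈ Subgroup.center G, ρ g ≠ 1) (k : ℕ) :
    Subsingleton (groupCohomology (Rep.of (charRep G ρ)) k) := by
  obtain ⟨g, hg, hρg⟩ := hnt
  exact ModuleCat.subsingleton_of_isZero
    (isZero_groupCohomology_of_isUnit_sub_one _ hg (isUnit_charRep_sub_one hρg) k)

/-- If `ρ : ℤⁿ →* ℂˣ` is a nontrivial character, then all group cohomology of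
`ℤⁿ` with coefficients in the associated one-dimensional representation vanishes. -/
theorem groupCohomology_zn_nontrivial_char_eq_zero (n : ℕ)
    (ρ : Multiplicative (Fin n → ℤ) →* ℂˣ) (hnt : ∃ x, ρ x ≠ 1) (k : ℕ) :
    Subsingleton
      (groupCohomology (Rep.of (charRep (Multiplicative (Fin n → ℤ)) ρ)) k) := by
  exact groupCohomology_zn_nontrivial_char_eq_zero_general ρ
    (by simpa [CommGroup.center_eq_top] using hnt) k
end

section
/- Let H be a subgroup of finite index in the unit group 𝓞_E^×, and let a₁, …, a_g, c₁, …, c_g be integers. If for every ε ∈ H one has ∏_{i=1}^{g} σᵢ(ε)^{aᵢ} · (conj(σᵢ(ε)))^{-cᵢ} = 1 in ℂ, then there exists an integer m such that aᵢ − cᵢ = m for every 1 ≤ i ≤ g. -/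
open NumberField

/-!
Taking absolute values in the relation, and passing from `ε ∈ H` to arbitrary units through powers,
yields `∑ i, (aᵢ - cᵢ) log |σᵢ(u)| = 0` for every unit `u`, a linear relation between the
logarithms at the infinite places. The product formula `∑ w, mult w * log (w u) = 0` is one such
relation, and it is the only one up to scaling: choose a place `w₀` at which the ratio of the
coefficients to the multiplicities is largest and, by Dirichlet, a unit `u` which is less than `1`
at every other place. Subtracting from the relation its multiple of the product formula which
cancels the coefficient at `w₀` leaves a vanishing sum of nonnegative terms, so all of them vanish,
and with them all the coefficients. When no place is real, all multiplicities are `2`.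
-/

theorem eq_of_forall_le_of_sum_mul_eq_zero {ι R : Type*} [Fintype ι] [Ring R] [PartialOrder R]
    [IsStrictOrderedRing R] {b x : ι → R} {i₀ : ι} (hb : ∀ i, b i ≤ b i₀)
    (hx : ∀ i, i ≠ i₀ → x i < 0) (hsum : ∑ i, x i = 0) (hbsum : ∑ i, b i * x i = 0) (i : ι) :
    b i = b i₀ := by
  obtain rfl | hi := eq_or_ne i i₀
  · rfl
  have hnonpos : ∀ j ∈ Finset.univ, (b i₀ - b j) * x j ≤ 0 := by
    intro j _
    obtain rfl | hj := eq_or_ne j i₀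
    · simp
    · exact mul_nonpos_of_nonneg_of_nonpos (sub_nonneg.2 (hb j)) (hx j hj).le
  have hzero : ∑ j, (b i₀ - b j) * x j = 0 := by
    simp only [sub_mul, Finset.sum_sub_distrib, ← Finset.mul_sum, hsum, hbsum, mul_zero, sub_zero]
  have hi_zero : (b i₀ - b i) * x i = 0 :=
    (Finset.sum_eq_zero_iff_of_nonpos hnonpos).1 hzero i (Finset.mem_univ i)
  exact (hb i).eq_of_not_lt fun hlt =>
    (mul_neg_of_pos_of_neg (sub_pos.2 hlt) (hx i hi)).ne hi_zero

theorem log_norm_prod_zpow_mul_conj_zpow_neg {ι 𝕜 : Type*} [Fintype ι] [RCLike 𝕜] {z : ι → 𝕜}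
    (hz : ∀ i, z i ≠ 0) (a c : ι → ℤ) :
    Real.log ‖∏ i, z i ^ a i * starRingEnd 𝕜 (z i) ^ (-c i)‖ =
      ∑ i, ((a i : ℝ) - c i) * Real.log ‖z i‖ := by
  have hnorm : ∀ i, ‖z i ^ a i * starRingEnd 𝕜 (z i) ^ (-c i)‖ = ‖z i‖ ^ (a i - c i) := by
    intro i
    rw [norm_mul, norm_zpow, norm_zpow, RCLike.norm_conj, sub_eq_add_neg,
      zpow_add₀ (norm_ne_zero_iff.2 (hz i))]
  simp only [norm_prod, hnorm]
  rw [Real.log_prod fun i _ => zpow_ne_zero _ (norm_ne_zero_iff.2 (hz i))]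
  simp only [Real.log_zpow, Int.cast_sub]

section InfinitePlace

variable {K : Type*} [Field K]

theorem isTotallyComplex_of_isEmpty_ringHom_real (hK : IsEmpty (K →+* ℝ)) : IsTotallyComplex K where
  isComplex _ := InfinitePlace.not_isReal_iff_isComplex.1 fun hw =>
    hK.false (InfinitePlace.embedding_of_isReal hw)

theorem bijective_infinitePlace_mk_of_existsUnique {ι : Type*} {σ : ι → (K →+* ℂ)}
    (hσ : ∀ τ : K →+* ℂ, ∃! i, τ = σ i ∨ τ = (starRingEnd ℂ).comp (σ i)) :
    Function.Bijective fun i => InfinitePlace.mk (σ i) := by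
  have mk_eq_iff (w : InfinitePlace K) (i : ι) : InfinitePlace.mk (σ i) = w ↔
      w.embedding = σ i ∨ w.embedding = (starRingEnd ℂ).comp (σ i) := by
    conv_lhs => rw [← w.mk_embedding, InfinitePlace.mk_eq_iff]
    exact or_congr eq_comm eq_comm
  rw [Function.bijective_iff_existsUnique]
  intro w
  simpa only [mk_eq_iff] using hσ w.embedding

variable [NumberField K] {H : Subgroup (𝓞 K)ˣ} [H.FiniteIndex]

theorem sum_mul_log_eq_zero_of_forall_mem {b : InfinitePlace K → ℝ}
    (hb : ∀ u ∈ H, ∑ w, b w * Real.log (w (u : K)) = 0) (u : (𝓞 K)ˣ) :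
    ∑ w, b w * Real.log (w (u : K)) = 0 := by
  have hpow : (H.index : ℝ) * ∑ w, b w * Real.log (w (u : K)) = 0 := by
    simpa [Real.log_pow, mul_left_comm, Finset.mul_sum] using hb _ (H.pow_index_mem u)
  exact (mul_eq_zero.1 hpow).resolve_left (Nat.cast_ne_zero.2 Subgroup.FiniteIndex.index_ne_zero)

theorem exists_eq_mul_mult_of_sum_mul_log_eq_zero {b : InfinitePlace K → ℝ}
    (hb : ∀ u ∈ H, ∑ w, b w * Real.log (w (u : K)) = 0) :
    ∃ m : ℝ, ∀ w, b w = m * w.mult := by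
  obtain ⟨w₀, hw₀⟩ := Finite.exists_max fun w : InfinitePlace K => b w / w.mult
  obtain ⟨u, hu⟩ := Units.dirichletUnitTheorem.exists_unit K w₀
  have hneg (w) (hw : w ≠ w₀) : w.mult * Real.log (w (u : K)) < 0 :=
    mul_neg_of_pos_of_neg (Nat.cast_pos.2 InfinitePlace.mult_pos) (hu w hw)
  have hrel : ∑ w : InfinitePlace K, b w / w.mult * (w.mult * Real.log (w (u : K))) = 0 := by
    simpa only [← mul_assoc, div_mul_cancel₀ _ InfinitePlace.mult_coe_ne_zero] using
      sum_mul_log_eq_zero_of_forall_mem hb u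
  have hratio (w : InfinitePlace K) : b w / w.mult = b w₀ / w₀.mult :=
    eq_of_forall_le_of_sum_mul_eq_zero hw₀ hneg (Units.sum_mult_mul_log u) hrel w
  exact ⟨b w₀ / w₀.mult, fun w => (div_eq_iff InfinitePlace.mult_coe_ne_zero).1 (hratio w)⟩

end InfinitePlace

theorem exists_parallel_of_prod_embeddings_eq_one_general {K ι : Type*} [Field K] [NumberField K]
    [Fintype ι] {σ : ι → (K →+* ℂ)}
    (hσ : ∀ τ : K →+* ℂ, ∃! i, τ = σ i ∨ τ = (starRingEnd ℂ).comp (σ i))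
    {H : Subgroup (𝓞 K)ˣ} [H.FiniteIndex] {a c : ι → ℤ}
    (h : ∀ ε ∈ H, ∏ i, σ i ((ε : 𝓞 K) : K) ^ a i *
      starRingEnd ℂ (σ i ((ε : 𝓞 K) : K)) ^ (-c i) = 1) :
    ∃ m : ℝ, ∀ i, (a i : ℝ) - c i = m * (InfinitePlace.mk (σ i)).mult := by
  let e : ι ≃ InfinitePlace K := .ofBijective _ (bijective_infinitePlace_mk_of_existsUnique hσ)
  have he (i : ι) : e.symm (InfinitePlace.mk (σ i)) = i := e.symm_apply_apply i
  have hrel : ∀ u ∈ H, ∑ w, ((a (e.symm w) : ℝ) - c (e.symm w)) * Real.log (w (u : K)) = 0 := by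
    intro u hu
    have hne (i : ι) : σ i ((u : 𝓞 K) : K) ≠ 0 := by simp
    have hlog := log_norm_prod_zpow_mul_conj_zpow_neg hne a c
    rw [h u hu, norm_one, Real.log_one] at hlog
    rw [← e.sum_comp]
    simp only [e.symm_apply_apply]
    exact hlog.symm
  obtain ⟨m, hm⟩ := exists_eq_mul_mult_of_sum_mul_log_eq_zero hrel
  exact ⟨m, fun i => by simpa only [he] using hm (InfinitePlace.mk (σ i))⟩

/-- If, for every unit `ε` in a finite index subgroup `H` of `𝓞_E^×`,
`∏ i, σᵢ(ε)^{aᵢ} · conj(σᵢ(ε))^{-cᵢ} = 1`, then all the differences `aᵢ - cᵢ` are equal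
to a common integer `m`. -/
theorem exists_parallel_of_prod_embeddings_eq_one
    (E : Type*) [Field E] [NumberField E]
    (g : ℕ) (hg : 1 ≤ g) (hdeg : Module.finrank ℚ E = 2 * g)
    (hcomplex : IsEmpty (E →+* ℝ))
    (σ : Fin g → (E →+* ℂ))
    (hσ : ∀ τ : E →+* ℂ, ∃! i : Fin g,
      τ = σ i ∨ τ = (starRingEnd ℂ).comp (σ i))
    (H : Subgroup (𝓞 E)ˣ) (hH : H.FiniteIndex)
    (a c : Fin g → ℤ)
    (h : ∀ ε ∈ H, ∏ i,
      (σ i ((ε : 𝓞 E) : E)) ^ (a i) *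
        (starRingEnd ℂ (σ i ((ε : 𝓞 E) : E))) ^ (-(c i)) = 1) :
    ∃ m : ℤ, ∀ i, a i - c i = m := by
  have := isTotallyComplex_of_isEmpty_ringHom_real hcomplex
  obtain ⟨m, hm⟩ := exists_parallel_of_prod_embeddings_eq_one_general hσ h
  simp only [IsTotallyComplex.mult_eq] at hm
  exact ⟨a ⟨0, hg⟩ - c ⟨0, hg⟩, fun i => by exact_mod_cast (hm i).trans (hm ⟨0, hg⟩).symm⟩
end

section
/- Assume moreover that E is a CM field, in the sense that there is a ring automorphism α of E such that τ ∘ α = conj ∘ τ for every embedding τ : E → ℂ. Let H be a subgroup of finite index in 𝓞_E^× which is neat, in the concrete sense that for every ε ∈ H the subgroup of ℂ^× generated by the values τ(ε), with τ ranging over all embeddings of E into ℂ, is torsion-free. Let a₁, …, a_g, c₁, …, c_g be integers such that there exists an integer m with aᵢ − cᵢ = m for every 1 ≤ i ≤ g. Then for every ε ∈ H one has ∏_{i=1}^{g} σᵢ(ε)^{aᵢ} · (conj(σᵢ(ε)))^{-cᵢ} = 1 in ℂ. -/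
open NumberField

/-!
Complex conjugation preserves absolute values, so `u / α u` has absolute value one at every
infinite place and is a root of unity (Kronecker). Each `σᵢ(u) / conj (σᵢ(u))` is therefore a
torsion element of the group generated by the values of `u`; as that group is torsion-free, every
`σᵢ(u)` is real. An embedding is real exactly when `α` is trivial, so all infinite places have the
same multiplicity, and `|N(u)| = 1` says that `∏ᵢ σᵢ(u)` has absolute value one. Being real, this
product is `±1`, and torsion-freeness makes it `1`; it remains to raise it to the power `m`.
-/

section

open ComplexEmbedding

variable {K : Type*} [Field K] {α : K →+* K} {u : (𝓞 K)ˣ}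

/-- `α` is complex conjugation in every complex embedding. Such an `α` exists for CM fields, and for
totally real fields, where it is the identity. -/
def IsComplexConjugation (α : K →+* K) : Prop := ∀ φ : K →+* ℂ, conjugate φ = φ.comp α

/-- The subgroup of `ℂˣ` generated by the values of a unit `u` at all complex embeddings, whose
torsion measures the failure of `u` to be neat. -/
def conjugateGroup (u : (𝓞 K)ˣ) : Subgroup ℂˣ :=
  Subgroup.closure {z : ℂˣ | ∃ φ : K →+* ℂ, (z : ℂ) = φ u}

/-- A unit is neat if its conjugates generate a torsion-free group; a subgroup of the unit group is
neat when all its elements are. -/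
def IsNeatUnit (u : (𝓞 K)ˣ) : Prop := IsMulTorsionFree (conjugateGroup u)

theorem complexEmbedding_mem_conjugateGroup (φ : K →+* ℂ) (u : (𝓞 K)ˣ) :
    Units.complexEmbedding φ u ∈ conjugateGroup u :=
  Subgroup.subset_closure ⟨φ, rfl⟩

theorem IsNeatUnit.eq_one_of_isOfFinOrder (hu : IsNeatUnit u) {z : ℂˣ}
    (hz : z ∈ conjugateGroup u) (hfin : IsOfFinOrder z) : z = 1 :=
  have : IsMulTorsionFree (conjugateGroup u) := hu
  congrArg Subtype.val (Submonoid.isOfFinOrder_coe (x := ⟨z, hz⟩) |>.1 hfin).eq_one'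

theorem IsComplexConjugation.infinitePlace_map_eq (hα : IsComplexConjugation α)
    (w : InfinitePlace K) (x : K) : w (α x) = w x := by
  rw [← w.norm_embedding_eq, ← RingHom.comp_apply, ← hα, conjugate_coe_eq, RCLike.norm_conj,
    w.norm_embedding_eq]

theorem isReal_iff_eq_id_of_conjugate_eq_comp {φ : K →+* ℂ} (hα : conjugate φ = φ.comp α) :
    IsReal φ ↔ α = RingHom.id K := by
  rw [isReal_iff, hα, ← RingHom.cancel_left φ.injective, RingHom.comp_id]

theorem IsComplexConjugation.mult_eq_mult (hα : IsComplexConjugation α) (v w : InfinitePlace K) :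
    v.mult = w.mult := by
  have hvw : v.IsReal ↔ w.IsReal := by
    simp only [InfinitePlace.isReal_iff, isReal_iff_eq_id_of_conjugate_eq_comp (hα _)]
  classical simp only [InfinitePlace.mult, hvw]

theorem bijective_mk_of_existsUnique_eq_or_eq_conjugate {ι : Type*} {σ : ι → K →+* ℂ}
    (hσ : ∀ φ : K →+* ℂ, ∃! i, φ = σ i ∨ φ = conjugate (σ i)) :
    Function.Bijective fun i ↦ InfinitePlace.mk (σ i) := by
  refine (Function.bijective_iff_existsUnique _).2 fun w ↦ ?_
  have hmk (i : ι) : InfinitePlace.mk (σ i) = w ↔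
      w.embedding = σ i ∨ w.embedding = conjugate (σ i) := by
    rw [← w.mk_embedding, InfinitePlace.mk_eq_iff, w.mk_embedding, eq_comm,
      eq_comm (a := conjugate (σ i))]
  simpa only [hmk] using hσ w.embedding

variable [NumberField K]

theorem IsComplexConjugation.div_map_mem_torsion (hα : IsComplexConjugation α) (u : (𝓞 K)ˣ) :
    u / Units.map (RingOfIntegers.mapRingHom α).toMonoidHom u ∈ Units.torsion K := by
  refine (Units.mem_torsion K).2 fun w ↦ ?_
  set v := Units.map (RingOfIntegers.mapRingHom α).toMonoidHom u
  have hv : w v = w u := hα.infinitePlace_map_eq w u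
  have hmul : w (u / v : (𝓞 K)ˣ) * w v = w u := by
    rw [← map_mul, ← Units.coe_mul, div_mul_cancel]
  exact (mul_eq_right₀ (Units.pos_at_place u w).ne').1 (hv ▸ hmul)

theorem IsNeatUnit.conj_apply_eq (hu : IsNeatUnit u) (hα : IsComplexConjugation α)
    (φ : K →+* ℂ) : starRingEnd ℂ (φ u) = φ u := by
  let v := Units.map (RingOfIntegers.mapRingHom α).toMonoidHom u
  have hv : Units.complexEmbedding φ v = Units.complexEmbedding (conjugate φ) u :=
    Units.ext (RingHom.congr_fun (hα φ) (u : K)).symm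
  have hmem : Units.complexEmbedding φ (u / v) ∈ conjugateGroup u := by
    rw [map_div, hv]
    exact div_mem (complexEmbedding_mem_conjugateGroup φ u)
      (complexEmbedding_mem_conjugateGroup (conjugate φ) u)
  have hfin : IsOfFinOrder (Units.complexEmbedding φ (u / v)) :=
    MonoidHom.isOfFinOrder _ (hα.div_map_mem_torsion u)
  have hone := hu.eq_one_of_isOfFinOrder hmem hfin
  rw [map_div, div_eq_one, hv] at hone
  exact (congrArg Units.val hone).symm

theorem prod_infinitePlace_eq_one (hmult : ∀ v w : InfinitePlace K, v.mult = w.mult)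
    (u : (𝓞 K)ˣ) : ∏ w : InfinitePlace K, w u = 1 := by
  obtain ⟨w₀⟩ : Nonempty (InfinitePlace K) := inferInstance
  refine (pow_eq_one_iff_of_nonneg (Finset.prod_nonneg fun w _ ↦ apply_nonneg w _)
    w₀.mult_ne_zero).1 ?_
  calc (∏ w : InfinitePlace K, w u) ^ w₀.mult
      = ∏ w : InfinitePlace K, w u ^ w.mult := by
        rw [← Finset.prod_pow]
        exact Finset.prod_congr rfl fun w _ ↦ by rw [hmult w₀ w]
    _ = 1 := by rw [InfinitePlace.prod_eq_abs_norm, Units.norm, Rat.cast_one]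

variable {ι : Type*} [Fintype ι] {σ : ι → K →+* ℂ}

theorem norm_prod_embeddings_eq_one
    (hσ : ∀ φ : K →+* ℂ, ∃! i, φ = σ i ∨ φ = conjugate (σ i))
    (hmult : ∀ v w : InfinitePlace K, v.mult = w.mult) (u : (𝓞 K)ˣ) :
    ‖∏ i, σ i u‖ = 1 := by
  rw [norm_prod, ← prod_infinitePlace_eq_one hmult u]
  exact (bijective_mk_of_existsUnique_eq_or_eq_conjugate hσ).prod_comp fun w ↦ w u

theorem IsNeatUnit.prod_embeddings_eq_one (hu : IsNeatUnit u)
    (hσ : ∀ φ : K →+* ℂ, ∃! i, φ = σ i ∨ φ = conjugate (σ i))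
    (hα : IsComplexConjugation α) : ∏ i, σ i u = 1 := by
  have hreal : starRingEnd ℂ (∏ i, σ i u) = ∏ i, σ i u := by
    simp only [map_prod, hu.conj_apply_eq hα]
  have hsq : (∏ i, σ i u) ^ 2 = 1 := by
    calc (∏ i, σ i u) ^ 2 = (∏ i, σ i u) * starRingEnd ℂ (∏ i, σ i u) := by rw [hreal, sq]
      _ = 1 := by
        rw [Complex.mul_conj', norm_prod_embeddings_eq_one hσ hα.mult_eq_mult, Complex.ofReal_one,
          one_pow]
  have hcoe : ((∏ i, Units.complexEmbedding (σ i) u : ℂˣ) : ℂ) = ∏ i, σ i u := Units.coe_prod ..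
  have hfin : IsOfFinOrder (∏ i, Units.complexEmbedding (σ i) u) :=
    isOfFinOrder_iff_pow_eq_one.2 ⟨2, two_pos,
      Units.ext (by rw [Units.val_pow_eq_pow_val, hcoe, hsq, Units.val_one])⟩
  have hmem : ∏ i, Units.complexEmbedding (σ i) u ∈ conjugateGroup u :=
    prod_mem fun i _ ↦ complexEmbedding_mem_conjugateGroup (σ i) u
  rw [← hcoe, hu.eq_one_of_isOfFinOrder hmem hfin, Units.val_one]

theorem prod_embeddings_eq_one_of_parallel_of_neat_general
    (hσ : ∀ φ : K →+* ℂ, ∃! i, φ = σ i ∨ φ = conjugate (σ i))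
    (hα : IsComplexConjugation α)
    (hu : IsNeatUnit u) {a c : ι → ℤ} {m : ℤ} (hm : ∀ i, a i - c i = m) :
    ∏ i, σ i u ^ a i * starRingEnd ℂ (σ i u) ^ (-c i) = 1 := by
  have hterm (i : ι) : σ i u ^ a i * starRingEnd ℂ (σ i u) ^ (-c i) = σ i u ^ m := by
    rw [hu.conj_apply_eq hα, ← zpow_add₀ ((map_ne_zero _).2 u.coe_ne_zero), ← sub_eq_add_neg, hm]
  calc ∏ i, σ i u ^ a i * starRingEnd ℂ (σ i u) ^ (-c i)
      = ∏ i, σ i u ^ m := Finset.prod_congr rfl fun i _ ↦ hterm i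
    _ = (∏ i, σ i u) ^ m := Finset.prod_zpow ..
    _ = 1 := by rw [hu.prod_embeddings_eq_one hσ hα, one_zpow]

end

/-- Suppose moreover that `E` is a CM field (there is an automorphism `α` of
`E` with `τ ∘ α = conj ∘ τ` for all embeddings `τ : E → ℂ`) and that `H` is a neat finite
index subgroup of `𝓞_E^×` (for each `ε ∈ H`, the subgroup of `ℂˣ` generated by all values
`τ(ε)` is torsion-free). If all differences `aᵢ - cᵢ` equal a common integer `m`, then for
every `ε ∈ H` one has `∏ i, σᵢ(ε)^{aᵢ} · conj(σᵢ(ε))^{-cᵢ} = 1`. -/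
theorem prod_embeddings_eq_one_of_parallel_of_neat
    (E : Type*) [Field E] [NumberField E]
    (g : ℕ) (hg : 1 ≤ g) (hdeg : Module.finrank ℚ E = 2 * g)
    (hcomplex : IsEmpty (E →+* ℝ))
    (σ : Fin g → (E →+* ℂ))
    (hσ : ∀ τ : E →+* ℂ, ∃! i : Fin g,
      τ = σ i ∨ τ = (starRingEnd ℂ).comp (σ i))
    (α : E ≃+* E)
    (hCM : ∀ (τ : E →+* ℂ) (x : E), τ (α x) = starRingEnd ℂ (τ x))
    (H : Subgroup (𝓞 E)ˣ) (hH : H.FiniteIndex)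
    (hneat : ∀ ε ∈ H, IsMulTorsionFree
      (Subgroup.closure {z : ℂˣ | ∃ τ : E →+* ℂ, (z : ℂ) = τ ((ε : 𝓞 E) : E)}))
    (a c : Fin g → ℤ) (m : ℤ) (hm : ∀ i, a i - c i = m) :
    ∀ ε ∈ H, ∏ i,
      (σ i ((ε : 𝓞 E) : E)) ^ (a i) *
        (starRingEnd ℂ (σ i ((ε : 𝓞 E) : E))) ^ (-(c i)) = 1 :=
  fun ε hε ↦ prod_embeddings_eq_one_of_parallel_of_neat_general (α := (α : E →+* E)) hσ
    (fun τ ↦ RingHom.ext fun x ↦ (hCM τ x).symm) (hneat ε hε) hm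
end

section
/- Let σ be a positive permutation of {1,2,3} and τ a permutation of {1,2,3} that is not positive, and let (a,b,c) and (a',b',c') be dominant triples of integers. Then the integer (σ•(a,b,c))₁ − (σ•(a,b,c))₃ is different from the integer (τ•(a',b',c'))₁ − (τ•(a',b',c'))₃, where (v)₁ and (v)₃ denote the first and third entries of a triple v. -/
/-- The half-sum weight `ρ = (1, 0, -1)`. -/
def rhoWt : Fin 3 → ℤ := ![1, 0, -1]

/-- The dot action of a permutation `σ` of `{1,2,3}` on a triple `v ∈ ℤ³`:
permute the entries of `v + ρ = (v₁+1, v₂, v₃-1)` according to `σ`, then subtract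
`ρ = (1, 0, -1)`. -/
def dotAct (σ : Equiv.Perm (Fin 3)) (v : Fin 3 → ℤ) : Fin 3 → ℤ :=
  fun i => (v (σ⁻¹ i) + rhoWt (σ⁻¹ i)) - rhoWt i

/-- A permutation of `{1,2,3}` is positive if it is the identity or one of the
transpositions `(1 2)`, `(2 3)` (i.e. its Coxeter length is at most 1). -/
def IsPositivePerm (σ : Equiv.Perm (Fin 3)) : Prop :=
  σ = 1 ∨ σ = Equiv.swap 0 1 ∨ σ = Equiv.swap 1 2

/-- A triple of integers is dominant if its entries are weakly decreasing. -/
def IsDominantTriple (v : Fin 3 → ℤ) : Prop := v 1 ≤ v 0 ∧ v 2 ≤ v 1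

/-- A triple of integers is regular if its entries are strictly decreasing. -/
def IsRegularTriple (v : Fin 3 → ℤ) : Prop := v 1 < v 0 ∧ v 2 < v 1

/-! The triple `σ • v + ρ` is a rearrangement of `v + ρ`, which is strictly decreasing exactly when
`v` is dominant. For such `v` the first entry of `σ • v + ρ` therefore exceeds the third if and only
if `σ⁻¹ 1 < σ⁻¹ 3`, and this characterizes the positive permutations. As `ρ₁ - ρ₃ = 2`, it means
that `(σ • v)₁ - (σ • v)₃` is above the threshold `-2` precisely when `σ` is positive. -/

theorem isPositivePerm_iff_inv_zero_lt_inv_two (σ : Equiv.Perm (Fin 3)) :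
    IsPositivePerm σ ↔ σ⁻¹ 0 < σ⁻¹ 2 := by
  unfold IsPositivePerm
  decide +revert

theorem isDominantTriple_iff_strictAnti_add_rhoWt (v : Fin 3 → ℤ) :
    IsDominantTriple v ↔ StrictAnti (v + rhoWt) := by
  suffices h_steps : IsDominantTriple v ↔ v 1 + 0 < v 0 + 1 ∧ v 2 + -1 < v 1 + 0 by
    rw [h_steps, Fin.strictAnti_iff_succ_lt, Fin.forall_fin_two]
    rfl
  unfold IsDominantTriple
  omega

theorem dotAct_add_rhoWt (σ : Equiv.Perm (Fin 3)) (v : Fin 3 → ℤ) :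
    dotAct σ v + rhoWt = (v + rhoWt) ∘ ⇑σ⁻¹ := by
  funext i
  exact sub_add_cancel _ _

theorem IsDominantTriple.isPositivePerm_iff_neg_two_lt_dotAct_sub {v : Fin 3 → ℤ}
    (hv : IsDominantTriple v) (σ : Equiv.Perm (Fin 3)) :
    IsPositivePerm σ ↔ -2 < dotAct σ v 0 - dotAct σ v 2 := by
  have h_anti : StrictAnti (v + rhoWt) := (isDominantTriple_iff_strictAnti_add_rhoWt v).1 hv
  calc
    IsPositivePerm σ ↔ σ⁻¹ 0 < σ⁻¹ 2 := isPositivePerm_iff_inv_zero_lt_inv_two σ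
    _ ↔ (v + rhoWt) (σ⁻¹ 2) < (v + rhoWt) (σ⁻¹ 0) := h_anti.lt_iff_gt.symm
    _ ↔ (dotAct σ v + rhoWt) 2 < (dotAct σ v + rhoWt) 0 := by
      rw [dotAct_add_rhoWt]
      rfl
    _ ↔ -2 < dotAct σ v 0 - dotAct σ v 2 := by
      change dotAct σ v 2 + -1 < dotAct σ v 0 + 1 ↔ _
      omega

/-- For a positive permutation `σ`, a non-positive permutation `τ`, and
dominant triples `v`, `v'`, the quantities `(σ•v)₁ - (σ•v)₃` and `(τ•v')₁ - (τ•v')₃`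
are distinct. -/
theorem dotAct_diff_ne_of_positive_of_not_positive
    (σ τ : Equiv.Perm (Fin 3)) (hσ : IsPositivePerm σ) (hτ : ¬ IsPositivePerm τ)
    (v v' : Fin 3 → ℤ) (hv : IsDominantTriple v) (hv' : IsDominantTriple v') :
    dotAct σ v 0 - dotAct σ v 2 ≠ dotAct τ v' 0 - dotAct τ v' 2 := by
  intro h_eq
  have h_above : -2 < dotAct σ v 0 - dotAct σ v 2 :=
    (hv.isPositivePerm_iff_neg_two_lt_dotAct_sub σ).1 hσ
  rw [h_eq] at h_above
  exact hτ ((hv'.isPositivePerm_iff_neg_two_lt_dotAct_sub τ).2 h_above)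
end

section
/- Let r ≥ 0 and g ≥ 1 be integers, let aᵢ, bᵢ, cᵢ (1 ≤ i ≤ g) and d be integers, and let p be an integer. Then the following are equivalent. (1) There exist integers α⁺ᵢ, α⁻ᵢ, β⁺ᵢ, β⁻ᵢ, γ⁺ᵢ, γ⁻ᵢ (1 ≤ i ≤ g), each lying in the interval [0, r], such that aᵢ = α⁻ᵢ − α⁺ᵢ, bᵢ = β⁻ᵢ − β⁺ᵢ, cᵢ = γ⁻ᵢ − γ⁺ᵢ for all i, d = −Σ_{i=1}^{g}(α⁻ᵢ + β⁻ᵢ + γ⁻ᵢ), and p = Σ_{i=1}^{g}(α⁺ᵢ + α⁻ᵢ + β⁺ᵢ + β⁻ᵢ + γ⁺ᵢ + γ⁻ᵢ). (2) One has p = −2d − Σ_{i=1}^{g}(aᵢ + bᵢ + cᵢ), each of aᵢ, bᵢ, cᵢ lies in [−r, r] for every i, and 3gr + Σ_{i=1}^{g}(aᵢ⁻ + bᵢ⁻ + cᵢ⁻) ≥ −d ≥ Σ_{i=1}^{g}(aᵢ⁺ + bᵢ⁺ + cᵢ⁺). -/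
/-! Since `u = v - a` is determined by `v`, the conditions `0 ≤ u, v ≤ r` say that `v` lies in the
interval `[a⁺, r + a⁻]` (with `a⁻ = min a 0`), which is nonempty exactly when `-r ≤ a ≤ r`. The sum
of the `v i` then ranges over the Minkowski sum of these intervals, which is again an interval. The
`3g` integers `aᵢ, bᵢ, cᵢ` form a single family indexed by `Fin g × Fin 3`. -/

section OrderedMonoid

open scoped Pointwise

variable {ι M : Type*} [AddCommMonoid M] [LinearOrder M] [IsOrderedAddMonoid M]
  [AddLeftReflectLE M] [ExistsAddOfLE M]

theorem sum_Icc_eq_Icc_sum (s : Finset ι) {l u : ι → M} (h : ∀ i ∈ s, l i ≤ u i) :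
    ∑ i ∈ s, Set.Icc (l i) (u i) = Set.Icc (∑ i ∈ s, l i) (∑ i ∈ s, u i) := by
  induction s using Finset.cons_induction with
  | empty => simp only [Finset.sum_empty, Set.Icc_self, Set.singleton_zero]
  | cons j s hj ih =>
    obtain ⟨hlu, hs⟩ := (Finset.forall_mem_cons hj _).1 h
    rw [Finset.sum_cons, Finset.sum_cons, Finset.sum_cons, ih hs,
      Set.Icc_add_Icc hlu (Finset.sum_le_sum hs)]

theorem exists_mem_Icc_sum_eq_iff [Fintype ι] {l u : ι → M} {n : M} :
    (∃ f : ι → M, (∀ i, f i ∈ Set.Icc (l i) (u i)) ∧ ∑ i, f i = n) ↔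
      (∀ i, l i ≤ u i) ∧ n ∈ Set.Icc (∑ i, l i) (∑ i, u i) := by
  have mem_sum : n ∈ ∑ i, Set.Icc (l i) (u i) ↔
      ∃ f : ι → M, (∀ i, f i ∈ Set.Icc (l i) (u i)) ∧ ∑ i, f i = n := by
    simp only [Set.mem_fintype_sum, exists_prop]
  rw [← mem_sum]
  constructor
  · intro hn
    obtain ⟨f, hf, -⟩ := mem_sum.1 hn
    have hlu : ∀ i, l i ≤ u i := fun i => (hf i).1.trans (hf i).2
    exact ⟨hlu, sum_Icc_eq_Icc_sum _ (fun i _ => hlu i) ▸ hn⟩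
  · rintro ⟨hlu, hn⟩
    rwa [sum_Icc_eq_Icc_sum _ fun i _ => hlu i]

end OrderedMonoid

section OrderedGroup

variable {ι G : Type*} [AddCommGroup G] [LinearOrder G] [IsOrderedAddMonoid G]

theorem sub_mem_Icc_and_mem_Icc_iff {r a v : G} :
    v - a ∈ Set.Icc 0 r ∧ v ∈ Set.Icc 0 r ↔ v ∈ Set.Icc (max a 0) (r + min a 0) := by
  rw [Set.sub_mem_Icc_iff_left, ← Set.mem_inter_iff, Set.Icc_inter_Icc, zero_add,
    ← min_add_add_left, add_zero]

theorem max_zero_le_add_min_zero_iff {r a : G} :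
    max a 0 ≤ r + min a 0 ↔ -r ≤ a ∧ a ≤ r := by
  rw [← sub_le_iff_le_add, max_sub_min_eq_abs, zero_sub, abs_neg, abs_le]

theorem exterior_power_weight_characterization_general [Fintype ι] (r a : ι → G) (d p : G) :
    (∃ u v : ι → G, (∀ i, 0 ≤ u i ∧ u i ≤ r i ∧ 0 ≤ v i ∧ v i ≤ r i) ∧
      (∀ i, a i = v i - u i) ∧ d = -∑ i, v i ∧ p = ∑ i, (u i + v i)) ↔
    p = -(2 • d) - ∑ i, a i ∧ (∀ i, -r i ≤ a i ∧ a i ≤ r i) ∧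
      -d ≤ ∑ i, r i + ∑ i, min (a i) 0 ∧ ∑ i, max (a i) 0 ≤ -d := by
  have sum_sub_add (v : ι → G) : ∑ i, (v i - a i + v i) = 2 • ∑ i, v i - ∑ i, a i := by
    rw [Finset.sum_add_distrib, Finset.sum_sub_distrib]
    abel
  have exists_v_iff : (∃ v : ι → G, (∀ i, v i ∈ Set.Icc (max (a i) 0) (r i + min (a i) 0)) ∧
      ∑ i, v i = -d) ↔ (∀ i, -r i ≤ a i ∧ a i ≤ r i) ∧
        -d ≤ ∑ i, r i + ∑ i, min (a i) 0 ∧ ∑ i, max (a i) 0 ≤ -d := by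
    rw [exists_mem_Icc_sum_eq_iff, Set.mem_Icc, Finset.sum_add_distrib,
      and_comm (a := ∑ i, max (a i) 0 ≤ -d)]
    simp only [max_zero_le_add_min_zero_iff]
  rw [← exists_v_iff]
  simp only [← sub_mem_Icc_and_mem_Icc_iff]
  constructor
  · rintro ⟨u, v, hbound, ha, rfl, rfl⟩
    obtain rfl : u = fun i => v i - a i := funext fun i => by rw [ha, sub_sub_cancel]
    refine ⟨by rw [sum_sub_add, smul_neg, neg_neg], v, fun i => ?_, (neg_neg _).symm⟩
    exact and_assoc.2 (hbound i)
  · rintro ⟨rfl, v, hv, hd⟩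
    refine ⟨fun i => v i - a i, v, fun i => and_assoc.1 (hv i), fun i => (sub_sub_cancel _ _).symm,
      by rw [hd, neg_neg], ?_⟩
    rw [sum_sub_add, hd, smul_neg]

end OrderedGroup

theorem exists_exists_prod_fin_three {ι β : Type*}
    {P : (ι × Fin 3 → β) → (ι × Fin 3 → β) → Prop} :
    (∃ u v, P u v) ↔ ∃ u₀ v₀ u₁ v₁ u₂ v₂ : ι → β,
      P (fun k => ![u₀, u₁, u₂] k.2 k.1) (fun k => ![v₀, v₁, v₂] k.2 k.1) := by
  have eq_uncurry (w : ι × Fin 3 → β) :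
      w = fun k => ![fun i => w (i, 0), fun i => w (i, 1), fun i => w (i, 2)] k.2 k.1 := by
    ext ⟨i, j⟩
    fin_cases j <;> rfl
  constructor
  · rintro ⟨u, v, h⟩
    rw [eq_uncurry u, eq_uncurry v] at h
    exact ⟨_, _, _, _, _, _, h⟩
  · rintro ⟨_, _, _, _, _, _, h⟩
    exact ⟨_, _, h⟩

/-- characterization of the highest weights `((aᵢ,bᵢ,cᵢ)ᵢ, d)` (with
`p = -2d - Σ(aᵢ+bᵢ+cᵢ)`) arising from eigenvectors of `Λ^p((V^∨)^{⊕r})`: existence of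
exponents `α±ᵢ, β±ᵢ, γ±ᵢ ∈ [0,r]` realizing the data is equivalent to the stated system
of inequalities, where `x⁺ = max x 0` and `x⁻ = min x 0`. -/
theorem exterior_power_weight_characterization
    (r g : ℕ) (hg : 1 ≤ g) (a b c : Fin g → ℤ) (d p : ℤ) :
    (∃ αp αm βp βm γp γm : Fin g → ℤ,
      (∀ i, 0 ≤ αp i ∧ αp i ≤ (r : ℤ) ∧ 0 ≤ αm i ∧ αm i ≤ (r : ℤ) ∧
        0 ≤ βp i ∧ βp i ≤ (r : ℤ) ∧ 0 ≤ βm i ∧ βm i ≤ (r : ℤ) ∧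
        0 ≤ γp i ∧ γp i ≤ (r : ℤ) ∧ 0 ≤ γm i ∧ γm i ≤ (r : ℤ)) ∧
      (∀ i, a i = αm i - αp i) ∧ (∀ i, b i = βm i - βp i) ∧ (∀ i, c i = γm i - γp i) ∧
      d = -∑ i, (αm i + βm i + γm i) ∧
      p = ∑ i, (αp i + αm i + βp i + βm i + γp i + γm i)) ↔
    (p = -2 * d - ∑ i, (a i + b i + c i) ∧
      (∀ i, -(r : ℤ) ≤ a i ∧ a i ≤ (r : ℤ) ∧ -(r : ℤ) ≤ b i ∧ b i ≤ (r : ℤ) ∧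
        -(r : ℤ) ≤ c i ∧ c i ≤ (r : ℤ)) ∧
      -d ≤ 3 * (g : ℤ) * (r : ℤ) + ∑ i, (min (a i) 0 + min (b i) 0 + min (c i) 0) ∧
      ∑ i, (max (a i) 0 + max (b i) 0 + max (c i) 0) ≤ -d) := by
  have key := exterior_power_weight_characterization_general (ι := Fin g × Fin 3)
    (fun _ => (r : ℤ)) (fun k => ![a, b, c] k.2 k.1) d p
  simp only [exists_exists_prod_fin_three, Prod.forall, Fin.forall_fin_succ] at key
  simpa [Fintype.sum_prod_type, Fin.sum_univ_three, forall_and, and_assoc, add_assoc, mul_comm]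
    using key
end
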